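/- arXiv:1512.05937 — 2 statements merged into one kernel-verified Lean document; each statement's English description precedes it below -/
import Mathlib

section
/- Let M be the ℂ-linear endomorphism of the polynomial ring ℂ[X] given by multiplication by X and D the ℂ-linear endomorphism given by the formal derivative. For all m, n, r, s ∈ ℕ: M^m ∘ D^n ∘ M^r ∘ D^s = Σ_{i=0}^{min(n,r)} i!·C(n,i)·C(r,i)·M^{m+r−i} ∘ D^{n+s−i}, where C(·,·) denotes the binomial coefficient. -/
/-!
The formula holds for any two elements of a semiring with `a * b = b * a + 1`. Moving a single `b`
to the left past `a ^ k` leaves `k • a ^ (k - 1)` behind. Hence, when the factors of `b ^ r` are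
moved past `a ^ n` one at a time, each either ends up on the left or is absorbed by some `a`: if `i`
of them are absorbed, these can be chosen in `r.choose i` ways and paired with factors `a` in
`n.descFactorial i = i ! * n.choose i` ways.
-/

/-- multiplication by X on ℂ[X] -/
noncomputable def MX : Module.End ℂ (Polynomial ℂ) := LinearMap.mulLeft ℂ Polynomial.X

/-- the formal derivative on ℂ[X] -/
noncomputable def DX : Module.End ℂ (Polynomial ℂ) := Polynomial.derivative

section CanonicalCommutation

variable {A : Type*} [Semiring A] {a b : A}

theorem pow_mul_eq_mul_pow_add_nsmul_pow (h : a * b = b * a + 1) (n : ℕ) :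
    a ^ n * b = b * a ^ n + n • a ^ (n - 1) := by
  induction n with
  | zero => simp
  | succ n ih =>
    have absorb : n • (a ^ (n - 1) * a) = n • a ^ n := by
      cases n <;> simp [pow_succ]
    calc a ^ (n + 1) * b = a ^ n * b * a + a ^ n := by
          rw [pow_succ, mul_assoc, h, mul_add, mul_one, ← mul_assoc]
      _ = b * a ^ (n + 1) + (n • a ^ n + a ^ n) := by
          rw [ih, add_mul, mul_assoc, ← pow_succ, smul_mul_assoc, absorb, add_assoc]
      _ = b * a ^ (n + 1) + (n + 1) • a ^ (n + 1 - 1) := by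
          rw [← succ_nsmul, Nat.add_sub_cancel]

theorem descFactorial_nsmul_pow_mul_pow_mul (h : a * b = b * a + 1) (n i j : ℕ) :
    n.descFactorial i • (b ^ j * a ^ (n - i)) * b =
      n.descFactorial i • (b ^ (j + 1) * a ^ (n - i)) +
        n.descFactorial (i + 1) • (b ^ j * a ^ (n - (i + 1))) := by
  rw [smul_mul_assoc, mul_assoc, pow_mul_eq_mul_pow_add_nsmul_pow h, mul_add, ← mul_assoc,
    ← pow_succ, mul_smul_comm, smul_add, smul_smul, Nat.descFactorial_succ,
    mul_comm (n - i), Nat.sub_sub]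

theorem pow_mul_pow_eq_sum_antidiagonal (h : a * b = b * a + 1) (n r : ℕ) :
    a ^ n * b ^ r = ∑ ij ∈ Finset.HasAntidiagonal.antidiagonal r,
      r.choose ij.1 • n.descFactorial ij.1 • (b ^ ij.2 * a ^ (n - ij.1)) := by
  induction r with
  | zero => simp
  | succ r ih =>
    rw [Finset.sum_antidiagonal_choose_succ_nsmul
        fun i j => n.descFactorial i • (b ^ j * a ^ (n - i)),
      pow_succ, ← mul_assoc, ih, Finset.sum_mul, ← Finset.sum_add_distrib]
    refine Finset.sum_congr rfl fun ij hij => ?_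
    rw [smul_mul_assoc, descFactorial_nsmul_pow_mul_pow_mul h, smul_add,
      Nat.choose_symm_of_eq_add (Finset.HasAntidiagonal.mem_antidiagonal.mp hij).symm]

theorem pow_mul_pow_eq_sum_range_min (h : a * b = b * a + 1) (n r : ℕ) :
    a ^ n * b ^ r = ∑ i ∈ Finset.range (min n r + 1),
      (i.factorial * n.choose i * r.choose i) • (b ^ (r - i) * a ^ (n - i)) := by
  have full_sum : a ^ n * b ^ r = ∑ i ∈ Finset.range (r + 1),
      (i.factorial * n.choose i * r.choose i) • (b ^ (r - i) * a ^ (n - i)) := by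
    simp only [pow_mul_pow_eq_sum_antidiagonal h, Finset.Nat.sum_antidiagonal_eq_sum_range_succ_mk,
      smul_smul, Nat.descFactorial_eq_factorial_mul_choose, mul_comm (r.choose _)]
  rw [full_sum]
  refine (Finset.sum_subset (Finset.range_mono (by lia)) fun i hi hi' => ?_).symm
  have n_lt_i : n < i := by
    rw [Finset.mem_range] at hi hi'
    lia
  rw [Nat.choose_eq_zero_of_lt n_lt_i, mul_zero, zero_mul, zero_smul]

theorem normal_ordering_formula_general (h : a * b = b * a + 1) (m n r s : ℕ) :
    b ^ m * a ^ n * b ^ r * a ^ s = ∑ i ∈ Finset.range (min n r + 1),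
      (i.factorial * n.choose i * r.choose i) • (b ^ (m + r - i) * a ^ (n + s - i)) := by
  rw [mul_assoc (b ^ m), pow_mul_pow_eq_sum_range_min h, Finset.mul_sum, Finset.sum_mul]
  refine Finset.sum_congr rfl fun i hi => ?_
  have i_le : i ≤ n ∧ i ≤ r := le_min_iff.mp (Finset.mem_range_succ_iff.mp hi)
  rw [mul_smul_comm, smul_mul_assoc, ← mul_assoc, ← pow_add, mul_assoc (b ^ _), ← pow_add,
    Nat.add_sub_assoc i_le.2, Nat.sub_add_comm i_le.1]

end CanonicalCommutation

theorem derivative_mul_mulLeft_X {R : Type*} [CommSemiring R] :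
    (Polynomial.derivative * LinearMap.mulLeft R Polynomial.X : Module.End R (Polynomial R)) =
      LinearMap.mulLeft R Polynomial.X * Polynomial.derivative + 1 := by
  refine LinearMap.ext fun p => ?_
  simp [Polynomial.derivative_mul, add_comm]

/-- the normal ordering formula
`M^m ∘ D^n ∘ M^r ∘ D^s = Σ_{i=0}^{min(n,r)} i!·C(n,i)·C(r,i)·M^{m+r−i} ∘ D^{n+s−i}`. -/
theorem normal_ordering_formula (m n r s : ℕ) :
    MX ^ m * DX ^ n * MX ^ r * DX ^ s =
      ∑ i ∈ Finset.range (min n r + 1),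
        (Nat.factorial i * Nat.choose n i * Nat.choose r i) •
          (MX ^ (m + r - i) * DX ^ (n + s - i)) :=
  normal_ordering_formula_general derivative_mul_mulLeft_X m n r s
end

section
/- WSym is free as an associative ℂ-algebra on the set of indivisible set partitions: the unique unital ℂ-algebra morphism from the free associative ℂ-algebra on the set of indivisible set partitions to WSym sending each indivisible set partition π to M_π is an isomorphism of algebras. -/
open scoped TensorProduct

/-- set partitions of `{1,…,n}` for some `n` -/
def IsSP (π : Finset (Finset ℕ)) : Prop :=
  ∅ ∉ π ∧ (∀ b ∈ π, ∀ b' ∈ π, b ≠ b' → Disjoint b b') ∧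
  ∃ n : ℕ, π.biUnion id = Finset.Icc 1 n

/-- the type of set partitions -/
abbrev SP := {π : Finset (Finset ℕ) // IsSP π}

/-- the underlying space of `WSym`: the free ℂ-vector space on set partitions -/
abbrev WS := SP →₀ ℂ

theorem empty_isSP : IsSP ∅ :=
  ⟨by simp, by simp, 0, by rw [Finset.biUnion_empty]; exact (Finset.Icc_eq_empty (by norm_num)).symm⟩

/-- the integer `n` such that `π ⊨ n` -/
def spn (π : Finset (Finset ℕ)) : ℕ := (π.biUnion id).card

def shiftSP (n : ℕ) (π : Finset (Finset ℕ)) : Finset (Finset ℕ) :=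
  π.image fun b => b.image (· + n)

/-- `π ⊎ π'` -/
def uplusSP (π π' : Finset (Finset ℕ)) : Finset (Finset ℕ) := π ∪ shiftSP (spn π) π'

/-- indivisible set partitions -/
def IndivSP (π : Finset (Finset ℕ)) : Prop :=
  π ≠ ∅ ∧ ∀ π₁ π₂ : Finset (Finset ℕ), IsSP π₁ → IsSP π₂ → π = uplusSP π₁ π₂ →
    π₁ = π ∨ π₂ = π

/-- a partial matching between the blocks of `π` and those of `πs` -/
def MatchSP (π πs : Finset (Finset ℕ)) (m : Finset (Finset ℕ × Finset ℕ)) : Prop :=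
  (∀ p ∈ m, p.1 ∈ π ∧ p.2 ∈ πs) ∧
  (∀ p ∈ m, ∀ q ∈ m, (p.1 = q.1 ∨ p.2 = q.2) → p = q)

open scoped Classical in
noncomputable def matchingsSP (π πs : Finset (Finset ℕ)) :
    Finset (Finset (Finset ℕ × Finset ℕ)) :=
  (π ×ˢ πs).powerset.filter fun m => MatchSP π πs m

/-- merge the matched pairs of blocks -/
def mergeSP (π πs : Finset (Finset ℕ)) (m : Finset (Finset ℕ × Finset ℕ)) :
    Finset (Finset ℕ) :=
  ((π \ m.image Prod.fst) ∪ (πs \ m.image Prod.snd)) ∪ m.image fun p => p.1 ∪ p.2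

open scoped Classical in
noncomputable def mkSP (π : Finset (Finset ℕ)) : WS :=
  if h : IsSP π then Finsupp.single ⟨π, h⟩ 1 else 0

noncomputable def unitW : WS := Finsupp.single ⟨∅, empty_isSP⟩ 1

noncomputable def liftW {V : Type*} [AddCommMonoid V] [Module ℂ V] (f : SP → V) :
    WS →ₗ[ℂ] V :=
  Finsupp.lsum ℂ fun π => LinearMap.toSpanSingleton ℂ V (f π)

/-- `M_π · M_π'`: the sum over all ways of merging blocks of `π` with blocks of the
shifted `π'` along a partial matching -/
noncomputable def mulfunSP (π π' : SP) : WS :=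
  ∑ m ∈ matchingsSP π.1 (shiftSP (spn π.1) π'.1),
    mkSP (mergeSP π.1 (shiftSP (spn π.1) π'.1) m)

/-- the product of `WSym` -/
noncomputable def mulW : WS →ₗ[ℂ] WS →ₗ[ℂ] WS := liftW fun π => liftW fun π' => mulfunSP π π'

/-- standardization of a set of blocks -/
def stdSP (e : Finset (Finset ℕ)) : Finset (Finset ℕ) :=
  e.image fun b => b.image fun x => ((e.biUnion id).filter (· ≤ x)).card

open scoped Classical in
noncomputable def dfunSP (π : SP) : WS ⊗[ℂ] WS :=
  ∑ e ∈ π.1.powerset, mkSP (stdSP e) ⊗ₜ[ℂ] mkSP (stdSP (π.1 \ e))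

/-- the coproduct of `WSym` -/
noncomputable def deltaW : WS →ₗ[ℂ] WS ⊗[ℂ] WS := liftW dfunSP

/-- the counit of `WSym` -/
noncomputable def counitW : WS →ₗ[ℂ] ℂ := liftW fun π => if π.1 = ∅ then (1 : ℂ) else 0

/-- the set of indivisible set partitions -/
abbrev GSP := {π : SP // IndivSP π.1}

/-- product in `WSym` of a word of indivisible set partitions -/
noncomputable def wordProdW (l : List GSP) : WS :=
  (l.map fun g => (Finsupp.single g.1 1 : WS)).foldr (fun x acc => mulW x acc) unitW

/-- the linear extension of `wordProdW`, i.e. the unique unital algebra morphism from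
the free associative ℂ-algebra on the indivisible set partitions (realized as the
vector space with basis the words over them) to `WSym`, sending each generator `π`
to `M_π`. -/
noncomputable def PsiW : (List GSP →₀ ℂ) →ₗ[ℂ] WS :=
  Finsupp.lsum ℂ fun w => LinearMap.toSpanSingleton ℂ WS (wordProdW w)

/-!
Cutting a set partition `ρ` of `{1,…,n}` after `k` gives a restriction to `{1,…,k}` and a
standardized restriction to `{k+1,…,n}`, and `ρ` is recovered by gluing them along a unique partial
matching. Hence `M_ρ` has coefficient `1` in `M_a · M_b` if `(a, b)` is a cut of `ρ`, and `0`
otherwise: the product is convolution with respect to cutting, which makes associativity formal.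

A nonempty matching lowers the number of blocks, so `M_{a ⊎ b}` is the term of `M_a · M_b` with the
most blocks. Iterating, the image of a word `π₁ ⋯ πᵣ` is `M_{π₁ ⊎ ⋯ ⊎ πᵣ}` plus terms with fewer
blocks. Under `⊎`, set partitions form a graded monoid with Levi's common refinement property, so
they factor uniquely into indivisible ones: `π₁ ⋯ πᵣ ↦ π₁ ⊎ ⋯ ⊎ πᵣ` is a bijection from words to set
partitions, and the map is unitriangular.
-/

section Unitriangular

variable {R W S α : Type*} [Ring R] [LinearOrder α] {e : W → S} {r : S → α} {v : W → S →₀ R}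

theorem linearCombination_injective_of_unitriangular (he : Function.Injective e)
    (hdiag : ∀ w, v w (e w) = 1) (htri : ∀ w s, v w s ≠ 0 → s = e w ∨ r s < r (e w)) :
    Function.Injective (Finsupp.linearCombination R v) := by
  rw [injective_iff_map_eq_zero]
  intro f hf
  by_contra hne
  obtain ⟨w, hw, hmax⟩ :=
    f.support.exists_max_image (fun w => r (e w)) (Finsupp.support_nonempty_iff.2 hne)
  have hother : ∀ u ∈ f.support, u ≠ w → f u * v u (e w) = 0 := by
    intro u hu huw
    by_contra h0
    rcases htri u (e w) (right_ne_zero_of_mul h0) with h | h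
    · exact huw (he h).symm
    · exact (hmax u hu).not_gt h
  have hcoeff : Finsupp.linearCombination R v f (e w) = f w := by
    simp only [Finsupp.linearCombination_apply, Finsupp.sum, Finsupp.finsetSum_apply,
      Finsupp.smul_apply, smul_eq_mul]
    rw [Finset.sum_eq_single_of_mem w hw hother, hdiag, mul_one]
  exact Finsupp.mem_support_iff.1 hw (by rw [← hcoeff, hf, Finsupp.zero_apply])

theorem linearCombination_surjective_of_unitriangular [WellFoundedLT α]
    (he : Function.Surjective e)
    (hdiag : ∀ w, v w (e w) = 1) (htri : ∀ w s, v w s ≠ 0 → s = e w ∨ r s < r (e w)) :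
    Function.Surjective (Finsupp.linearCombination R v) := by
  classical
  rw [← LinearMap.range_eq_top, eq_top_iff, ← Finsupp.iSup_lsingle_range, iSup_le_iff]
  suffices h : ∀ s, Finsupp.single s 1 ∈ LinearMap.range (Finsupp.linearCombination R v) by
    rintro s _ ⟨c, rfl⟩
    simpa using Submodule.smul_mem _ c (h s)
  intro s
  induction s using (InvImage.wf r wellFounded_lt).induction with
  | _ s ih =>
    obtain ⟨w, rfl⟩ := he s
    have hlower : (v w).erase (e w) ∈ LinearMap.range (Finsupp.linearCombination R v) := by
      rw [← Finsupp.sum_single ((v w).erase (e w))]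
      refine Submodule.sum_mem _ fun s hs => ?_
      rw [Finsupp.support_erase, Finset.mem_erase, Finsupp.mem_support_iff] at hs
      simpa using Submodule.smul_mem _ ((v w).erase (e w) s)
        (ih s ((htri w s hs.2).resolve_left hs.1))
    have hsplit : Finsupp.single (e w) 1 = v w - (v w).erase (e w) := by
      rw [eq_sub_iff_add_eq, ← hdiag w, Finsupp.single_add_erase]
    rw [hsplit]
    exact Submodule.sub_mem _ ⟨Finsupp.single w 1, by simp⟩ hlower

end Unitriangular

section EquidivisibleAddMonoid

variable {M ι : Type*} [AddMonoid M] {g : ι → M}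

/-- Levi's property of an additive monoid: two decompositions of the same element into two
summands have a common refinement. -/
def IsEquidivisible (M : Type*) [AddMonoid M] : Prop :=
  ∀ a b c d : M, a + b = c + d → ∃ e, (c = a + e ∧ b = e + d) ∨ (a = c + e ∧ d = e + b)

variable (ℓ : M →+ ℕ) (hℓ : ∀ a, ℓ a = 0 → a = 0)
include hℓ

theorem isAddUnit_iff_eq_zero_of_length {a : M} : IsAddUnit a ↔ a = 0 :=
  ⟨fun ha => hℓ a (Nat.isAddUnit_iff.1 (ha.map ℓ)), fun ha => ha ▸ isAddUnit_zero⟩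

theorem eq_zero_of_add_eq_zero_of_length {a b : M} (h : a + b = 0) : a = 0 := by
  have := congrArg ℓ h
  rw [map_add, map_zero] at this
  exact hℓ a (by omega)

theorem IsEquidivisible.eq_and_eq_of_addIrreducible (hM : IsEquidivisible M) {p q b d : M}
    (hp : AddIrreducible p) (hq : AddIrreducible q) (h : p + b = q + d) : p = q ∧ b = d := by
  have right_eq_zero {p q e : M} (hp : AddIrreducible p) (hq : AddIrreducible q)
      (h : q = p + e) : e = 0 :=
    (isAddUnit_iff_eq_zero_of_length ℓ hℓ).1
      ((hq.isAddUnit_or_isAddUnit h).resolve_left hp.not_isAddUnit)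
  obtain ⟨e, ⟨hqp, hbd⟩ | ⟨hpq, hdb⟩⟩ := hM p b q d h
  · obtain rfl := right_eq_zero hp hq hqp
    simp_all
  · obtain rfl := right_eq_zero hq hp hpq
    simp_all

theorem IsEquidivisible.sum_map_injective (hM : IsEquidivisible M) (hg : Function.Injective g)
    (hirr : ∀ i, AddIrreducible (g i)) : Function.Injective fun l : List ι => (l.map g).sum := by
  have cons_ne_zero (i : ι) (l : List ι) : g i + (l.map g).sum ≠ 0 := fun h =>
    (hirr i).not_isAddUnit ((isAddUnit_iff_eq_zero_of_length ℓ hℓ).2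
      (eq_zero_of_add_eq_zero_of_length ℓ hℓ h))
  intro u
  induction u with
  | nil =>
    rintro (_ | ⟨j, v⟩) h
    · rfl
    · exact absurd h.symm (cons_ne_zero j v)
  | cons i u ih =>
    rintro (_ | ⟨j, v⟩) h
    · exact absurd h (cons_ne_zero i u)
    · obtain ⟨hij, huv⟩ := hM.eq_and_eq_of_addIrreducible ℓ hℓ (hirr i) (hirr j) h
      rw [hg hij, ih huv]

theorem sum_map_surjective_of_length (hg : ∀ a, AddIrreducible a → a ∈ Set.range g) :
    Function.Surjective fun l : List ι => (l.map g).sum := by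
  intro a
  induction hn : ℓ a using Nat.strong_induction_on generalizing a with
  | _ n ih =>
    subst hn
    by_cases hunit : IsAddUnit a
    · exact ⟨[], ((isAddUnit_iff_eq_zero_of_length ℓ hℓ).1 hunit).symm⟩
    by_cases hirr : AddIrreducible a
    · obtain ⟨i, rfl⟩ := hg a hirr
      exact ⟨[i], by simp⟩
    · obtain ⟨b, c, rfl, hb, hc⟩ : ∃ b c, a = b + c ∧ ¬IsAddUnit b ∧ ¬IsAddUnit c := by
        simpa [addIrreducible_iff, hunit] using hirr
      have length_pos {x : M} (hx : ¬IsAddUnit x) : 0 < ℓ x :=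
        Nat.pos_of_ne_zero fun h => hx ((isAddUnit_iff_eq_zero_of_length ℓ hℓ).2 (hℓ x h))
      have hsum : ℓ (b + c) = ℓ b + ℓ c := map_add ℓ b c
      obtain ⟨u, hu⟩ := ih (ℓ b) (by have := length_pos hc; omega) b rfl
      obtain ⟨v, hv⟩ := ih (ℓ c) (by have := length_pos hb; omega) c rfl
      exact ⟨u ++ v, by simp only [List.map_append, List.sum_append] at hu hv ⊢; rw [hu, hv]⟩

end EquidivisibleAddMonoid

section Pullback

variable {α β γ : Type*} [DecidableEq α] [DecidableEq β] [DecidableEq γ]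

/-- The nonempty preimages in `t`, under `f`, of the blocks of a family `π`. For `f = id` this is
the trace of `π` on `t`; for a translation it is the standardized restriction of a set partition
to an interval. -/
def comapParts (f : β → α) (t : Finset β) (π : Finset (Finset α)) : Finset (Finset β) :=
  (π.image fun b => t.filter (f · ∈ b)).erase ∅

theorem mem_comapParts {f : β → α} {t : Finset β} {π : Finset (Finset α)} {c : Finset β} :
    c ∈ comapParts f t π ↔ c.Nonempty ∧ ∃ b ∈ π, t.filter (f · ∈ b) = c := by
  simp only [comapParts, Finset.mem_erase, Finset.mem_image, Finset.nonempty_iff_ne_empty]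

theorem comapParts_union (f : β → α) (t : Finset β) (π ρ : Finset (Finset α)) :
    comapParts f t (π ∪ ρ) = comapParts f t π ∪ comapParts f t ρ := by
  simp only [comapParts, Finset.image_union, Finset.erase_union_distrib]

theorem comapParts_congr {f : β → α} {t t' : Finset β} {π : Finset (Finset α)}
    (h : ∀ b ∈ π, ∀ x, f x ∈ b → (x ∈ t ↔ x ∈ t')) : comapParts f t π = comapParts f t' π := by
  have hfilter : ∀ b ∈ π, t.filter (f · ∈ b) = t'.filter (f · ∈ b) := fun b hb => by
    ext x
    simp only [Finset.mem_filter]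
    exact and_congr_left (h b hb x)
  rw [comapParts, comapParts, Finset.image_congr hfilter]

theorem comapParts_eq_empty {f : β → α} {t : Finset β} {π : Finset (Finset α)}
    (h : ∀ b ∈ π, ∀ x ∈ t, f x ∉ b) : comapParts f t π = ∅ := by
  refine Finset.eq_empty_of_forall_notMem fun c hc => ?_
  obtain ⟨⟨x, hx⟩, b, hb, rfl⟩ := mem_comapParts.1 hc
  exact h b hb x (Finset.mem_filter.1 hx).1 (Finset.mem_filter.1 hx).2

theorem comapParts_id_eq_self {t : Finset α} {π : Finset (Finset α)} (h0 : ∅ ∉ π)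
    (ht : ∀ b ∈ π, b ⊆ t) : comapParts id t π = π := by
  have hfilter : ∀ b ∈ π, t.filter (id · ∈ b) = b := fun b hb =>
    (Finset.filter_mem_eq_inter).trans (Finset.inter_eq_right.2 (ht b hb))
  rw [comapParts, Finset.image_congr hfilter, Finset.image_id', Finset.erase_eq_of_notMem h0]

theorem comapParts_comapParts (f : β → α) (g : γ → β) (t : Finset β) (u : Finset γ)
    (π : Finset (Finset α)) :
    comapParts g u (comapParts f t π) = comapParts (f ∘ g) (u.filter (g · ∈ t)) π := by
  have hfilter (b : Finset α) : u.filter (g · ∈ t.filter (f · ∈ b)) =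
      (u.filter (g · ∈ t)).filter ((f ∘ g) · ∈ b) := by
    ext x
    simp only [Finset.mem_filter, Function.comp_apply, and_assoc]
  ext c
  simp only [mem_comapParts]
  constructor
  · rintro ⟨hc, _, ⟨-, b, hb, rfl⟩, rfl⟩
    exact ⟨hc, b, hb, (hfilter b).symm⟩
  · rintro ⟨⟨x, hx⟩, b, hb, rfl⟩
    rw [← hfilter] at hx ⊢
    exact ⟨⟨x, hx⟩, _, ⟨⟨g x, (Finset.mem_filter.1 hx).2⟩, b, hb, rfl⟩, rfl⟩

theorem image_image_comapParts (f : β → α) (t : Finset β) (π : Finset (Finset α)) :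
    (comapParts f t π).image (Finset.image f) = comapParts id (t.image f) π := by
  have himage (b : Finset α) : (t.filter (f · ∈ b)).image f = (t.image f).filter (id · ∈ b) := by
    simp only [Finset.filter_image, id]
  ext c
  simp only [Finset.mem_image, mem_comapParts, ← himage]
  constructor
  · rintro ⟨_, ⟨hc, b, hb, rfl⟩, rfl⟩
    exact ⟨hc.image f, b, hb, rfl⟩
  · rintro ⟨hc, b, hb, rfl⟩
    exact ⟨_, ⟨hc.of_image, b, hb, rfl⟩, rfl⟩

theorem comapParts_image_image {f : β → α} (hf : Function.Injective f) (t : Finset β)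
    (π : Finset (Finset β)) :
    comapParts f t (π.image (Finset.image f)) = comapParts id t π := by
  have hfilter (b : Finset β) : t.filter (f · ∈ b.image f) = t.filter (id · ∈ b) :=
    Finset.filter_congr fun x _ => hf.mem_finset_image
  ext c
  simp only [mem_comapParts, Finset.exists_mem_image, hfilter]

/-- `comapParts` as an operation on set partitions. -/
def comapPartition {s : Finset α} (P : Finpartition s) (f : β → α) (t : Finset β) :
    Finpartition (t.filter (f · ∈ s)) :=
  Finpartition.ofExistsUnique (comapParts f t P.parts)
    (by
      intro c hc x hx
      obtain ⟨-, b, hb, rfl⟩ := mem_comapParts.1 hc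
      exact Finset.monotone_filter_right t (fun x _ h => P.subset hb h) hx)
    (by
      intro x hx
      obtain ⟨hxt, hxs⟩ := Finset.mem_filter.1 hx
      obtain ⟨b, ⟨hb, hxb⟩, hunique⟩ := P.existsUnique_mem hxs
      have hxc : x ∈ t.filter (f · ∈ b) := Finset.mem_filter.2 ⟨hxt, hxb⟩
      refine ⟨_, ⟨mem_comapParts.2 ⟨⟨x, hxc⟩, b, hb, rfl⟩, hxc⟩, ?_⟩
      rintro _ ⟨hc, hxc'⟩
      obtain ⟨-, b', hb', rfl⟩ := mem_comapParts.1 hc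
      rw [hunique b' ⟨hb', (Finset.mem_filter.1 hxc').2⟩])
    (fun h => Finset.not_nonempty_empty (mem_comapParts.1 h).1)

/-- The set partition of the image of `s` under `f` whose blocks are the images of those of `P`. -/
def imagePartition {s : Finset β} (P : Finpartition s) {f : β → α} (hf : Function.Injective f) :
    Finpartition (s.image f) :=
  Finpartition.ofExistsUnique (P.parts.image (Finset.image f))
    (by
      simp only [Finset.forall_mem_image]
      exact fun b hb => Finset.image_subset_image (P.subset hb))
    (by
      simp only [Finset.forall_mem_image]
      intro x hx
      obtain ⟨b, ⟨hb, hxb⟩, hunique⟩ := P.existsUnique_mem hx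
      refine ⟨b.image f, ⟨Finset.mem_image_of_mem _ hb, Finset.mem_image_of_mem f hxb⟩, ?_⟩
      rintro _ ⟨hc, hxc⟩
      obtain ⟨b', hb', rfl⟩ := Finset.mem_image.1 hc
      rw [hunique b' ⟨hb', hf.mem_finset_image.1 hxc⟩])
    (by
      simp only [Finset.mem_image, Finset.image_eq_empty, not_exists, not_and]
      exact fun b hb => P.ne_empty hb)

/-- The union of two set partitions of disjoint sets. -/
def unionPartition {s t : Finset α} (P : Finpartition s) (Q : Finpartition t)
    (hst : Disjoint s t) : Finpartition (s ∪ t) where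
  parts := P.parts ∪ Q.parts
  supIndep := by
    rw [Finset.supIndep_iff_pairwiseDisjoint, Finset.coe_union, Set.pairwiseDisjoint_union]
    exact ⟨P.disjoint, Q.disjoint, fun b hb c hc _ => hst.mono (P.le hb) (Q.le hc)⟩
  sup_parts := by rw [Finset.sup_union, P.sup_parts, Q.sup_parts, Finset.sup_eq_union]
  bot_notMem := by simp

end Pullback

section Matching

variable {π πs : Finset (Finset ℕ)} {m : Finset (Finset ℕ × Finset ℕ)}

theorem mem_matchingsSP : m ∈ matchingsSP π πs ↔ MatchSP π πs m := by
  classical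
  simp only [matchingsSP, Finset.mem_filter, Finset.mem_powerset, and_iff_right_iff_imp]
  exact fun hm p hp => Finset.mem_product.2 (hm.1 p hp)

theorem MatchSP.image_fst_subset (hm : MatchSP π πs m) : m.image Prod.fst ⊆ π :=
  Finset.image_subset_iff.2 fun p hp => (hm.1 p hp).1

theorem MatchSP.image_snd_subset (hm : MatchSP π πs m) : m.image Prod.snd ⊆ πs :=
  Finset.image_subset_iff.2 fun p hp => (hm.1 p hp).2

theorem MatchSP.card_mergeSP_add_card_le (hm : MatchSP π πs m) :
    (mergeSP π πs m).card + m.card ≤ π.card + πs.card := by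
  have hfst : (m.image Prod.fst).card = m.card :=
    Finset.card_image_of_injOn fun p hp q hq h => hm.2 p hp q hq (Or.inl h)
  have hsnd : (m.image Prod.snd).card = m.card :=
    Finset.card_image_of_injOn fun p hp q hq h => hm.2 p hp q hq (Or.inr h)
  have hπ := Finset.card_sdiff_add_card_eq_card hm.image_fst_subset
  have hπs := Finset.card_sdiff_add_card_eq_card hm.image_snd_subset
  calc (mergeSP π πs m).card + m.card
      ≤ ((π \ m.image Prod.fst).card + (πs \ m.image Prod.snd).card + m.card) + m.card := by
        gcongr
        exact (Finset.card_union_le _ _).trans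
          (add_le_add (Finset.card_union_le _ _) Finset.card_image_le)
    _ = π.card + πs.card := by omega

theorem mergeSP_empty (π πs : Finset (Finset ℕ)) : mergeSP π πs ∅ = π ∪ πs := by
  simp [mergeSP]

theorem MatchSP.biUnion_mergeSP (hm : MatchSP π πs m) :
    (mergeSP π πs m).biUnion id = π.biUnion id ∪ πs.biUnion id := by
  have hmerged : (m.image fun p => p.1 ∪ p.2).biUnion id =
      (m.image Prod.fst).biUnion id ∪ (m.image Prod.snd).biUnion id := by
    ext x
    simp only [Finset.mem_biUnion, Finset.mem_union, Finset.exists_mem_image, id]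
    simp only [← exists_or, ← and_or_left]
  rw [mergeSP, Finset.union_biUnion, Finset.union_biUnion, hmerged,
    Finset.union_union_union_comm, ← Finset.union_biUnion, ← Finset.union_biUnion,
    Finset.sdiff_union_of_subset hm.image_fst_subset,
    Finset.sdiff_union_of_subset hm.image_snd_subset]

theorem MatchSP.image_swap (hm : MatchSP π πs m) : MatchSP πs π (m.image Prod.swap) := by
  simp only [MatchSP, Finset.forall_mem_image]
  exact ⟨fun p hp => (hm.1 p hp).symm,
    fun p hp q hq h => congrArg Prod.swap (hm.2 p hp q hq h.symm)⟩

theorem mergeSP_image_swap (π πs : Finset (Finset ℕ)) (m : Finset (Finset ℕ × Finset ℕ)) :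
    mergeSP πs π (m.image Prod.swap) = mergeSP π πs m := by
  simp only [mergeSP, Finset.image_image, Function.comp_def, Prod.fst_swap, Prod.snd_swap]
  rw [Finset.union_comm (πs \ _)]
  simp only [Finset.union_comm]

/-- The matching that reconstructs a set partition `ρ` of `s ∪ t` from its traces on `s` and `t`:
the pairs `(b ∩ s, b ∩ t)` for the blocks `b` of `ρ` meeting both `s` and `t`. -/
def crossingPairs (s t : Finset ℕ) (ρ : Finset (Finset ℕ)) : Finset (Finset ℕ × Finset ℕ) :=
  (ρ.image fun b => (s ∩ b, t ∩ b)).filter fun p => p.1.Nonempty ∧ p.2.Nonempty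

theorem mem_crossingPairs {s t : Finset ℕ} {ρ : Finset (Finset ℕ)} {p : Finset ℕ × Finset ℕ} :
    p ∈ crossingPairs s t ρ ↔
      (∃ b ∈ ρ, (s ∩ b, t ∩ b) = p) ∧ p.1.Nonempty ∧ p.2.Nonempty := by
  simp only [crossingPairs, Finset.mem_filter, Finset.mem_image]

theorem mem_comapParts_id {s c : Finset ℕ} {ρ : Finset (Finset ℕ)} :
    c ∈ comapParts id s ρ ↔ c.Nonempty ∧ ∃ b ∈ ρ, s ∩ b = c := by
  simp only [mem_comapParts, id, Finset.filter_mem_eq_inter]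

theorem image_swap_crossingPairs (s t : Finset ℕ) (ρ : Finset (Finset ℕ)) :
    (crossingPairs s t ρ).image Prod.swap = crossingPairs t s ρ := by
  simp only [crossingPairs, Finset.filter_image, Finset.image_image, Function.comp_def,
    Prod.swap_prod_mk, and_comm]

section Finpartition

variable {s t : Finset ℕ} {P : Finpartition s} {Q : Finpartition t}

theorem MatchSP.inter_merged_left (hst : Disjoint s t) (hm : MatchSP P.parts Q.parts m)
    {p : Finset ℕ × Finset ℕ} (hp : p ∈ m) : s ∩ (p.1 ∪ p.2) = p.1 := by
  rw [Finset.inter_union_distrib_left, Finset.inter_eq_right.2 (P.subset (hm.1 p hp).1),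
    Finset.disjoint_iff_inter_eq_empty.1 (hst.mono_right (Q.subset (hm.1 p hp).2)),
    Finset.union_empty]

theorem MatchSP.inter_merged_right (hst : Disjoint s t) (hm : MatchSP P.parts Q.parts m)
    {p : Finset ℕ × Finset ℕ} (hp : p ∈ m) : t ∩ (p.1 ∪ p.2) = p.2 := by
  rw [Finset.union_comm]
  exact hm.image_swap.inter_merged_left hst.symm (Finset.mem_image_of_mem Prod.swap hp)

theorem MatchSP.comapParts_left_mergeSP (hst : Disjoint s t) (hm : MatchSP P.parts Q.parts m) :
    comapParts id s (mergeSP P.parts Q.parts m) = P.parts := by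
  have hQ : comapParts id s (Q.parts \ m.image Prod.snd) = ∅ :=
    comapParts_eq_empty fun b hb x hx hxb =>
      Finset.disjoint_left.1 hst hx (Q.subset (Finset.mem_sdiff.1 hb).1 hxb)
  have hmerged : comapParts id s (m.image fun p => p.1 ∪ p.2) = m.image Prod.fst := by
    ext c
    simp only [mem_comapParts_id, Finset.mem_image]
    constructor
    · rintro ⟨-, _, ⟨p, hp, rfl⟩, rfl⟩
      exact ⟨p, hp, (hm.inter_merged_left hst hp).symm⟩
    · rintro ⟨p, hp, rfl⟩
      exact ⟨P.nonempty_of_mem_parts (hm.1 p hp).1, _, ⟨p, hp, rfl⟩, hm.inter_merged_left hst hp⟩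
  rw [mergeSP, comapParts_union, comapParts_union, hQ, hmerged, Finset.union_empty,
    comapParts_id_eq_self (fun h => P.empty_notMem_parts (Finset.mem_sdiff.1 h).1)
      (fun b hb => P.subset (Finset.mem_sdiff.1 hb).1),
    Finset.sdiff_union_of_subset hm.image_fst_subset]

theorem MatchSP.comapParts_right_mergeSP (hst : Disjoint s t)
    (hm : MatchSP P.parts Q.parts m) :
    comapParts id t (mergeSP P.parts Q.parts m) = Q.parts := by
  rw [← mergeSP_image_swap]
  exact hm.image_swap.comapParts_left_mergeSP hst.symm

theorem MatchSP.crossingPairs_mergeSP (hst : Disjoint s t) (hm : MatchSP P.parts Q.parts m) :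
    crossingPairs s t (mergeSP P.parts Q.parts m) = m := by
  have hpair : ∀ p ∈ m, (s ∩ (p.1 ∪ p.2), t ∩ (p.1 ∪ p.2)) = p := fun p hp => by
    rw [hm.inter_merged_left hst hp, hm.inter_merged_right hst hp]
  ext p
  rw [mem_crossingPairs]
  constructor
  · rintro ⟨⟨b, hb, rfl⟩, ⟨x, hx⟩, ⟨y, hy⟩⟩
    rw [Finset.mem_inter] at hx hy
    rcases Finset.mem_union.1 hb with hb | hb
    · rcases Finset.mem_union.1 hb with hb | hb
      · exact (Finset.disjoint_left.1 hst (P.subset (Finset.mem_sdiff.1 hb).1 hy.2) hy.1).elim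
      · exact (Finset.disjoint_left.1 hst hx.1 (Q.subset (Finset.mem_sdiff.1 hb).1 hx.2)).elim
    · obtain ⟨q, hq, rfl⟩ := Finset.mem_image.1 hb
      rwa [hpair q hq]
  · intro hp
    exact ⟨⟨p.1 ∪ p.2, Finset.mem_union_right _ (Finset.mem_image_of_mem _ hp), hpair p hp⟩,
      P.nonempty_of_mem_parts (hm.1 p hp).1, Q.nonempty_of_mem_parts (hm.1 p hp).2⟩

variable (R : Finpartition (s ∪ t))

theorem matchSP_crossingPairs :
    MatchSP (comapParts id s R.parts) (comapParts id t R.parts) (crossingPairs s t R.parts) := by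
  have eq_of_inter_eq (u : Finset ℕ) {b c : Finset ℕ} (hb : b ∈ R.parts) (hc : c ∈ R.parts)
      (hne : (u ∩ b).Nonempty) (h : u ∩ b = u ∩ c) : b = c := by
    obtain ⟨x, hx⟩ := hne
    exact R.eq_of_mem_parts hb hc (Finset.mem_inter.1 hx).2 (Finset.mem_inter.1 (h ▸ hx)).2
  simp only [MatchSP, mem_crossingPairs, mem_comapParts_id]
  constructor
  · rintro _ ⟨⟨b, hb, rfl⟩, hs, ht⟩
    exact ⟨⟨hs, b, hb, rfl⟩, ht, b, hb, rfl⟩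
  · rintro _ ⟨⟨b, hb, rfl⟩, hs, ht⟩ _ ⟨⟨c, hc, rfl⟩, -⟩ (h | h)
    · rw [eq_of_inter_eq s hb hc hs h]
    · rw [eq_of_inter_eq t hb hc ht h]

theorem image_merge_crossingPairs :
    (crossingPairs s t R.parts).image (fun p => p.1 ∪ p.2) =
      R.parts.filter fun b => ¬Disjoint s b ∧ ¬Disjoint t b := by
  have hmerge : ∀ b ∈ R.parts, s ∩ b ∪ t ∩ b = b := fun b hb => by
    rw [← Finset.union_inter_distrib_right, Finset.inter_eq_right.2 (R.subset hb)]
  simp only [crossingPairs, Finset.filter_image, Finset.image_image, Function.comp_def,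
    Finset.not_disjoint_iff_nonempty_inter]
  rw [Finset.image_congr fun b hb => hmerge b (Finset.mem_filter.1 hb).1, Finset.image_id']

theorem comapParts_sdiff_image_fst_crossingPairs :
    comapParts id s R.parts \ (crossingPairs s t R.parts).image Prod.fst =
      R.parts.filter fun b => Disjoint t b := by
  have inter_eq {b : Finset ℕ} (hb : b ∈ R.parts) (ht : Disjoint t b) : s ∩ b = b :=
    Finset.inter_eq_right.2 (ht.symm.left_le_of_le_sup_right (R.le hb))
  ext c
  simp only [Finset.mem_sdiff, Finset.mem_filter, Finset.mem_image, mem_crossingPairs,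
    mem_comapParts_id]
  constructor
  · rintro ⟨⟨hs, b, hb, rfl⟩, hunmatched⟩
    have ht : Disjoint t b := by
      rw [← Finset.not_nonempty_iff_eq_empty.trans Finset.disjoint_iff_inter_eq_empty.symm]
      exact fun ht => hunmatched ⟨_, ⟨⟨b, hb, rfl⟩, hs, ht⟩, rfl⟩
    rw [inter_eq hb ht]
    exact ⟨hb, ht⟩
  · rintro ⟨hc, ht⟩
    refine ⟨⟨R.nonempty_of_mem_parts hc, c, hc, inter_eq hc ht⟩, ?_⟩
    rintro ⟨_, ⟨⟨b, hb, rfl⟩, ⟨x, hx⟩, hbt⟩, rfl⟩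
    have hbc : b = s ∩ b := R.eq_of_mem_parts hb hc (Finset.mem_inter.1 hx).2 hx
    exact Finset.not_disjoint_iff_nonempty_inter.2 hbt (hbc.symm ▸ ht : Disjoint t b)

theorem comapParts_sdiff_image_snd_crossingPairs :
    comapParts id t R.parts \ (crossingPairs s t R.parts).image Prod.snd =
      R.parts.filter fun b => Disjoint s b := by
  have h := comapParts_sdiff_image_fst_crossingPairs (R.copy (Finset.union_comm s t))
  rwa [← image_swap_crossingPairs, Finset.image_image] at h

theorem mergeSP_crossingPairs :
    mergeSP (comapParts id s R.parts) (comapParts id t R.parts) (crossingPairs s t R.parts) =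
      R.parts := by
  rw [mergeSP, comapParts_sdiff_image_fst_crossingPairs, comapParts_sdiff_image_snd_crossingPairs,
    image_merge_crossingPairs, ← Finset.filter_or, ← Finset.filter_or]
  exact Finset.filter_true_of_mem fun b _ => by tauto

end Finpartition

end Matching

section ShiftSP

theorem shiftSP_injective (n : ℕ) : Function.Injective (shiftSP n) :=
  Finset.image_injective (Finset.image_injective (add_left_injective n))

theorem shiftSP_union (n : ℕ) (π ρ : Finset (Finset ℕ)) :
    shiftSP n (π ∪ ρ) = shiftSP n π ∪ shiftSP n ρ :=
  Finset.image_union _ _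

theorem shiftSP_zero (π : Finset (Finset ℕ)) : shiftSP 0 π = π := by
  simp [shiftSP]

theorem shiftSP_shiftSP (m n : ℕ) (π : Finset (Finset ℕ)) :
    shiftSP m (shiftSP n π) = shiftSP (n + m) π := by
  simp only [shiftSP, Finset.image_image, Function.comp_def, add_assoc]

theorem card_shiftSP (n : ℕ) (π : Finset (Finset ℕ)) : (shiftSP n π).card = π.card :=
  Finset.card_image_of_injective _ (Finset.image_injective (add_left_injective n))

theorem lt_of_mem_shiftSP {n x : ℕ} {b : Finset ℕ} {π : Finset (Finset ℕ)} (hπ : 0 ∉ π.biUnion id)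
    (hb : b ∈ shiftSP n π) (hx : x ∈ b) : n < x := by
  obtain ⟨c, hc, rfl⟩ := Finset.mem_image.1 hb
  obtain ⟨y, hy, rfl⟩ := Finset.mem_image.1 hx
  have : y ≠ 0 := fun h => hπ (Finset.mem_biUnion.2 ⟨c, hc, h ▸ hy⟩)
  omega

theorem disjoint_Icc_image_add (k l : ℕ) :
    Disjoint (Finset.Icc 1 k) ((Finset.Icc 1 l).image (· + k)) := by
  rw [Finset.disjoint_left]
  simp only [Finset.mem_image, Finset.mem_Icc]
  omega

theorem Icc_union_image_add (k l : ℕ) :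
    Finset.Icc 1 k ∪ (Finset.Icc 1 l).image (· + k) = Finset.Icc 1 (k + l) := by
  rw [Finset.image_add_right_Icc]
  ext x
  simp only [Finset.mem_union, Finset.mem_Icc]
  omega

theorem Icc_union_image_add_sub {k n : ℕ} (h : k ≤ n) :
    Finset.Icc 1 k ∪ (Finset.Icc 1 (n - k)).image (· + k) = Finset.Icc 1 n := by
  rw [Icc_union_image_add, Nat.add_sub_cancel' h]

end ShiftSP

namespace SP

variable {ρ : SP} {k n : ℕ}

theorem biUnion_eq_Icc (ρ : SP) : ρ.1.biUnion id = Finset.Icc 1 (spn ρ.1) := by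
  obtain ⟨-, -, n, hn⟩ := ρ.2
  rw [spn, hn, Nat.card_Icc, Nat.add_sub_cancel]

theorem zero_notMem_biUnion (ρ : SP) : 0 ∉ ρ.1.biUnion id := by
  simp [biUnion_eq_Icc]

/-- A set partition of `{1,…,n}` as a `Finpartition`. -/
def toFinpartition (ρ : SP) : Finpartition (Finset.Icc 1 (spn ρ.1)) where
  parts := ρ.1
  supIndep := Finset.supIndep_iff_pairwiseDisjoint.2 fun b hb c hc h => ρ.2.2.1 b hb c hc h
  sup_parts := by rw [Finset.sup_eq_biUnion, biUnion_eq_Icc]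
  bot_notMem := ρ.2.1

theorem toFinpartition_parts (ρ : SP) : ρ.toFinpartition.parts = ρ.1 := rfl

/-- A `Finpartition` of `{1,…,n}` as a set partition. -/
def ofFinpartition (P : Finpartition (Finset.Icc 1 n)) : SP :=
  ⟨P.parts, P.empty_notMem_parts, fun _ hb _ hc h => P.disjoint hb hc h, n, P.biUnion_parts⟩

theorem spn_ofFinpartition (P : Finpartition (Finset.Icc 1 n)) : spn (ofFinpartition P).1 = n := by
  rw [spn, ofFinpartition, P.biUnion_parts, Nat.card_Icc, Nat.add_sub_cancel]

theorem subset_Icc (ρ : SP) {b : Finset ℕ} (hb : b ∈ ρ.1) : b ⊆ Finset.Icc 1 (spn ρ.1) :=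
  ρ.toFinpartition.subset hb

/-- The restriction of a set partition to `{1,…,k}`. -/
def take (k : ℕ) (ρ : SP) : SP :=
  ofFinpartition (n := min k (spn ρ.1)) <|
    (comapPartition ρ.toFinpartition id (Finset.Icc 1 k)).copy <| by
      ext x
      simp only [Finset.mem_filter, Finset.mem_Icc, id]
      omega

/-- The standardized restriction of a set partition of `{1,…,n}` to `{k+1,…,n}`. -/
def drop (k : ℕ) (ρ : SP) : SP :=
  ofFinpartition (n := spn ρ.1 - k) <|
    (comapPartition ρ.toFinpartition (· + k) (Finset.Icc 1 (spn ρ.1 - k))).copy <| by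
      ext x
      simp only [Finset.mem_filter, Finset.mem_Icc]
      omega

theorem coe_take (k : ℕ) (ρ : SP) : (ρ.take k).1 = comapParts id (Finset.Icc 1 k) ρ.1 := rfl

theorem coe_drop (k : ℕ) (ρ : SP) :
    (ρ.drop k).1 = comapParts (· + k) (Finset.Icc 1 (spn ρ.1 - k)) ρ.1 := rfl

theorem spn_take (k : ℕ) (ρ : SP) : spn (ρ.take k).1 = min k (spn ρ.1) := spn_ofFinpartition _

theorem spn_drop (k : ℕ) (ρ : SP) : spn (ρ.drop k).1 = spn ρ.1 - k := spn_ofFinpartition _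

theorem take_take (j k : ℕ) (ρ : SP) : (ρ.take k).take j = ρ.take (min j k) := by
  apply Subtype.ext
  simp only [coe_take, comapParts_comapParts, Function.comp_id]
  congr 1
  ext x
  simp only [Finset.mem_filter, Finset.mem_Icc, id]
  omega

theorem drop_drop (j k : ℕ) (ρ : SP) : (ρ.drop k).drop j = ρ.drop (k + j) := by
  apply Subtype.ext
  rw [coe_drop, spn_drop, coe_drop, coe_drop, comapParts_comapParts]
  congr 1
  · ext x
    simp only [Function.comp_apply]
    omega
  · ext x
    simp only [Finset.mem_filter, Finset.mem_Icc]
    omega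

theorem drop_take_add (j k : ℕ) (ρ : SP) : (ρ.take (k + j)).drop k = (ρ.drop k).take j := by
  apply Subtype.ext
  rw [coe_drop, spn_take, coe_take, coe_take, coe_drop, comapParts_comapParts,
    comapParts_comapParts, Function.comp_id, Function.id_comp]
  congr 1
  ext x
  simp only [Finset.mem_filter, Finset.mem_Icc, id]
  omega

theorem shiftSP_drop (k : ℕ) (ρ : SP) :
    shiftSP k (ρ.drop k).1 =
      comapParts id ((Finset.Icc 1 (spn ρ.1 - k)).image (· + k)) ρ.1 :=
  image_image_comapParts _ _ _

/-- The translate by `n` of a set partition of `{1,…,k}`, as a partition of `{n+1,…,n+k}`. -/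
def shiftPartition (n : ℕ) (ρ : SP) :
    Finpartition ((Finset.Icc 1 (spn ρ.1)).image (· + n)) :=
  imagePartition ρ.toFinpartition (add_left_injective n)

theorem shiftPartition_parts (n : ℕ) (ρ : SP) : (ρ.shiftPartition n).parts = shiftSP n ρ.1 := rfl

/-- Set partitions form a monoid under `⊎`. -/
instance : Add SP where
  add a b := ofFinpartition ((unionPartition a.toFinpartition (b.shiftPartition (spn a.1))
    (disjoint_Icc_image_add _ _)).copy (Icc_union_image_add _ _))

instance : Zero SP where
  zero := ⟨∅, empty_isSP⟩

theorem coe_add (a b : SP) : (a + b).1 = uplusSP a.1 b.1 := rfl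

theorem coe_zero : (0 : SP).1 = ∅ := rfl

theorem spn_add (a b : SP) : spn (a + b).1 = spn a.1 + spn b.1 := spn_ofFinpartition _

theorem spn_zero : spn (0 : SP).1 = 0 := rfl

instance : AddMonoid SP where
  add_assoc a b c := Subtype.ext <| by
    simp only [coe_add, uplusSP, shiftSP_union, shiftSP_shiftSP, Finset.union_assoc]
    rw [← uplusSP, ← coe_add, spn_add, add_comm]
  zero_add a := Subtype.ext <| by
    simp only [coe_add, uplusSP, coe_zero, Finset.empty_union]
    exact shiftSP_zero _
  add_zero a := Subtype.ext (Finset.union_empty _)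
  nsmul := nsmulRec

/-- The number `n` of elements partitioned by a set partition of `{1,…,n}`, which grades the monoid
of set partitions. -/
def size : SP →+ ℕ where
  toFun ρ := spn ρ.1
  map_zero' := spn_zero
  map_add' := spn_add

theorem eq_zero_of_spn_eq_zero (h : spn ρ.1 = 0) : ρ = 0 := by
  refine Subtype.ext (Finset.eq_empty_of_forall_notMem fun b hb => ?_)
  have hsub := ρ.subset_Icc hb
  rw [h] at hsub
  exact ρ.toFinpartition.ne_empty hb (Finset.subset_empty.1 hsub)

theorem take_eq_self (h : spn ρ.1 ≤ k) : ρ.take k = ρ :=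
  Subtype.ext <| comapParts_id_eq_self ρ.2.1 fun _ hb =>
    (ρ.subset_Icc hb).trans (Finset.Icc_subset_Icc_right h)

theorem take_zero (ρ : SP) : ρ.take 0 = 0 :=
  eq_zero_of_spn_eq_zero (by rw [spn_take, Nat.zero_min])

theorem drop_zero (ρ : SP) : ρ.drop 0 = ρ :=
  Subtype.ext <| (comapParts_id_eq_self ρ.2.1 fun _ hb => ρ.subset_Icc hb :)

theorem shiftSP_take (n k : ℕ) (ρ : SP) :
    shiftSP n (ρ.take k).1 = comapParts id (Finset.Icc 1 (n + k)) (shiftSP n ρ.1) := by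
  calc shiftSP n (ρ.take k).1
      = shiftSP n (comapParts (· + n) (Finset.Icc 1 k) (shiftSP n ρ.1)) :=
        congrArg (shiftSP n) (comapParts_image_image (add_left_injective n) _ _).symm
    _ = comapParts id ((Finset.Icc 1 k).image (· + n)) (shiftSP n ρ.1) :=
        image_image_comapParts _ _ _
    _ = comapParts id (Finset.Icc 1 (n + k)) (shiftSP n ρ.1) := by
        refine comapParts_congr fun b hb x hx => ?_
        have hlt : n < x := lt_of_mem_shiftSP ρ.zero_notMem_biUnion hb hx
        rw [Finset.image_add_right_Icc, Finset.mem_Icc, Finset.mem_Icc]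
        omega

theorem take_spn_add_add (a b : SP) (k : ℕ) : (a + b).take (spn a.1 + k) = a + b.take k := by
  have ha : comapParts id (Finset.Icc 1 (spn a.1 + k)) a.1 = a.1 :=
    congrArg Subtype.val (take_eq_self (Nat.le_add_right (spn a.1) k))
  apply Subtype.ext
  rw [coe_take, coe_add, coe_add, uplusSP, uplusSP, comapParts_union, ha, shiftSP_take]

theorem drop_spn_add (a b : SP) : (a + b).drop (spn a.1) = b := by
  apply Subtype.ext
  have ha : comapParts (· + spn a.1) (Finset.Icc 1 (spn b.1)) a.1 = ∅ :=
    comapParts_eq_empty fun c hc x hx hxc => by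
      have := Finset.mem_Icc.1 hx
      have := Finset.mem_Icc.1 (a.subset_Icc hc hxc)
      omega
  rw [coe_drop, spn_add, Nat.add_sub_cancel_left, coe_add, uplusSP, comapParts_union, ha,
    Finset.empty_union]
  exact (comapParts_image_image (add_left_injective _) _ _).trans
    (comapParts_id_eq_self b.2.1 fun _ hc => b.subset_Icc hc)

instance : IsLeftCancelAdd SP where
  add_left_cancel a b c (h : a + b = a + c) := by
    rw [← drop_spn_add a b, h, drop_spn_add]

theorem isEquidivisible : IsEquidivisible SP := by
  have exists_add_of_spn_le {a b c d : SP} (h : a + b = c + d) (hle : spn a.1 ≤ spn c.1) :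
      ∃ e, c = a + e ∧ b = e + d := by
    have hc : c = a + b.take (spn c.1 - spn a.1) :=
      calc c = (c + d).take (spn c.1 + 0) := by rw [take_spn_add_add, take_zero, add_zero]
        _ = (a + b).take (spn a.1 + (spn c.1 - spn a.1)) := by
          rw [h, add_zero, Nat.add_sub_cancel' hle]
        _ = a + b.take (spn c.1 - spn a.1) := take_spn_add_add _ _ _
    refine ⟨_, hc, add_left_cancel (a := a) ?_⟩
    rw [← add_assoc, ← hc, h]
  intro a b c d h
  rcases le_total (spn a.1) (spn c.1) with hle | hle
  · exact (exists_add_of_spn_le h hle).imp fun _ => Or.inl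
  · exact (exists_add_of_spn_le h.symm hle).imp fun _ => Or.inr

theorem indivSP_iff_addIrreducible : IndivSP ρ.1 ↔ AddIrreducible ρ := by
  have isAddUnit_iff {a : SP} : IsAddUnit a ↔ a = 0 :=
    isAddUnit_iff_eq_zero_of_length size fun _ => eq_zero_of_spn_eq_zero
  have eq_right_iff {a b : SP} (h : ρ = a + b) : b = ρ ↔ a = 0 := by
    refine ⟨fun hb => eq_zero_of_spn_eq_zero ?_, fun ha => by rw [h, ha, zero_add]⟩
    have hspn := spn_add a b
    rw [← h, hb] at hspn
    exact right_eq_add.1 hspn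
  have eq_left_iff {a b : SP} (h : ρ = a + b) : a = ρ ↔ b = 0 := by
    rw [h, left_eq_add]
  rw [addIrreducible_iff, isAddUnit_iff, IndivSP, ← coe_zero, Ne, Subtype.coe_inj]
  refine and_congr_right fun _ => ⟨fun h a b hab => ?_, fun h π₁ π₂ h₁ h₂ hπ => ?_⟩
  · rw [isAddUnit_iff, isAddUnit_iff, ← eq_right_iff hab, ← eq_left_iff hab, Or.comm]
    exact (h a.1 b.1 a.2 b.2 (congrArg Subtype.val hab)).imp Subtype.ext Subtype.ext
  · have hab : ρ = ⟨π₁, h₁⟩ + ⟨π₂, h₂⟩ := Subtype.ext hπ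
    have := h hab
    rw [isAddUnit_iff, isAddUnit_iff, ← eq_right_iff hab, ← eq_left_iff hab, Or.comm] at this
    exact this.imp (congrArg Subtype.val) (congrArg Subtype.val)

theorem card_add (a b : SP) : (a + b).1.card = a.1.card + b.1.card := by
  rw [coe_add, uplusSP, Finset.card_union_of_disjoint, card_shiftSP]
  rw [Finset.disjoint_left]
  intro c hca hcb
  obtain ⟨x, hx⟩ := a.toFinpartition.nonempty_of_mem_parts hca
  have := lt_of_mem_shiftSP b.zero_notMem_biUnion hcb hx
  have := Finset.mem_Icc.1 (a.subset_Icc hca hx)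
  omega

variable {a b : SP} {m : Finset (Finset ℕ × Finset ℕ)}

/-- The matching that glues `ρ.take k` to the translate of `ρ.drop k` to give back `ρ`. -/
def crossingPairsAt (k : ℕ) (ρ : SP) : Finset (Finset ℕ × Finset ℕ) :=
  crossingPairs (Finset.Icc 1 k) ((Finset.Icc 1 (spn ρ.1 - k)).image (· + k)) ρ.1

theorem spn_le_of_take_eq (h : ρ.take k = a) : spn a.1 ≤ spn ρ.1 := by
  rw [← h, spn_take]
  exact min_le_right _ _

theorem matchSP_take_drop (h : k ≤ spn ρ.1) :
    MatchSP (ρ.take k).1 (shiftSP k (ρ.drop k).1) (ρ.crossingPairsAt k) := by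
  rw [shiftSP_drop]
  exact matchSP_crossingPairs (ρ.toFinpartition.copy (Icc_union_image_add_sub h).symm)

theorem mergeSP_take_drop (h : k ≤ spn ρ.1) :
    mergeSP (ρ.take k).1 (shiftSP k (ρ.drop k).1) (ρ.crossingPairsAt k) = ρ.1 := by
  rw [shiftSP_drop]
  exact mergeSP_crossingPairs (ρ.toFinpartition.copy (Icc_union_image_add_sub h).symm)

theorem take_drop_of_mergeSP_eq (hm : MatchSP a.1 (shiftSP (spn a.1) b.1) m)
    (hρ : mergeSP a.1 (shiftSP (spn a.1) b.1) m = ρ.1) :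
    ρ.take (spn a.1) = a ∧ ρ.drop (spn a.1) = b ∧ m = ρ.crossingPairsAt (spn a.1) := by
  have hdisj := disjoint_Icc_image_add (spn a.1) (spn b.1)
  replace hm : MatchSP a.toFinpartition.parts (b.shiftPartition (spn a.1)).parts m := hm
  replace hρ : mergeSP a.toFinpartition.parts (b.shiftPartition (spn a.1)).parts m = ρ.1 := hρ
  have hspn : spn ρ.1 = spn a.1 + spn b.1 := by
    rw [spn, ← hρ, hm.biUnion_mergeSP, Finpartition.biUnion_parts, Finpartition.biUnion_parts,
      Icc_union_image_add, Nat.card_Icc, Nat.add_sub_cancel]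
  refine ⟨Subtype.ext ?_, Subtype.ext (shiftSP_injective (spn a.1) ?_), ?_⟩
  · rw [coe_take, ← hρ, hm.comapParts_left_mergeSP hdisj, toFinpartition_parts]
  · rw [shiftSP_drop, hspn, Nat.add_sub_cancel_left, ← hρ, hm.comapParts_right_mergeSP hdisj,
      shiftPartition_parts]
  · rw [crossingPairsAt, hspn, Nat.add_sub_cancel_left, ← hρ, hm.crossingPairs_mergeSP hdisj]

theorem eq_take_add_drop_or_card_lt (h : k ≤ spn ρ.1) :
    ρ = ρ.take k + ρ.drop k ∨ ρ.1.card < (ρ.take k).1.card + (ρ.drop k).1.card := by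
  have hmerge := mergeSP_take_drop h
  rcases (ρ.crossingPairsAt k).eq_empty_or_nonempty with hempty | hne
  · left
    apply Subtype.ext
    rw [coe_add, uplusSP, spn_take, min_eq_left h, ← mergeSP_empty, ← hempty, hmerge]
  · right
    have hcard := (matchSP_take_drop h).card_mergeSP_add_card_le
    have := hne.card_pos
    rw [hmerge, card_shiftSP] at hcard
    omega

end SP

section Product

theorem mkSP_apply (π : Finset (Finset ℕ)) (ρ : SP) : mkSP π ρ = if π = ρ.1 then 1 else 0 := by
  classical
  rw [mkSP]
  split_ifs with hπ h h
  · rw [Finsupp.single_apply, if_pos (Subtype.ext h)]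
  · rw [Finsupp.single_apply, if_neg fun h' => h (congrArg Subtype.val h')]
  · exact (hπ (h ▸ ρ.2)).elim
  · rfl

theorem mulfunSP_apply (a b ρ : SP) :
    mulfunSP a b ρ = if ρ.take (spn a.1) = a ∧ ρ.drop (spn a.1) = b then 1 else 0 := by
  simp only [mulfunSP, Finsupp.finsetSum_apply, mkSP_apply]
  split_ifs with h
  · have hle := SP.spn_le_of_take_eq h.1
    have hmatch := SP.matchSP_take_drop hle
    have hmerge := SP.mergeSP_take_drop hle
    rw [h.1, h.2] at hmatch hmerge
    rw [Finset.sum_eq_single_of_mem _ (mem_matchingsSP.2 hmatch), if_pos hmerge]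
    exact fun m hm hne => if_neg fun hρ =>
      hne (SP.take_drop_of_mergeSP_eq (mem_matchingsSP.1 hm) hρ).2.2
  · refine Finset.sum_eq_zero fun m hm => if_neg fun hρ => h ?_
    obtain ⟨htake, hdrop, -⟩ := SP.take_drop_of_mergeSP_eq (mem_matchingsSP.1 hm) hρ
    exact ⟨htake, hdrop⟩

theorem mulW_single_single (a b : SP) (z w : ℂ) :
    mulW (Finsupp.single a z) (Finsupp.single b w) = (z * w) • mulfunSP a b := by
  simp [mulW, liftW, smul_smul]

theorem mulW_single_apply (a ρ : SP) (z : ℂ) (y : WS) :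
    mulW (Finsupp.single a z) y ρ =
      if ρ.take (spn a.1) = a then z * y (ρ.drop (spn a.1)) else 0 := by
  classical
  induction y using Finsupp.induction_linear with
  | zero => simp
  | add y y' hy hy' =>
    rw [map_add, Finsupp.add_apply, hy, hy', Finsupp.add_apply, mul_add]
    split_ifs <;> simp
  | single b w =>
    rw [mulW_single_single, Finsupp.smul_apply, mulfunSP_apply]
    simp only [Finsupp.single_apply, eq_comm (a := b), ite_and]
    split_ifs <;> simp

theorem mulW_apply (x y : WS) (ρ : SP) :
    mulW x y ρ = ∑ k ∈ Finset.range (spn ρ.1 + 1), x (ρ.take k) * y (ρ.drop k) := by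
  classical
  induction x using Finsupp.induction_linear with
  | zero => simp
  | add x x' hx hx' => simp [hx, hx', add_mul, Finset.sum_add_distrib]
  | single a z =>
    have spn_eq {k : ℕ} (h : a = ρ.take k) : spn a.1 = min k (spn ρ.1) := by
      rw [h, SP.spn_take]
    rw [mulW_single_apply, Finset.sum_eq_single (spn a.1)]
    · simp only [Finsupp.single_apply, eq_comm (a := a), ite_mul, zero_mul]
    · intro k hk hne
      rw [Finsupp.single_apply, if_neg, zero_mul]
      intro h
      have := spn_eq h
      have := Finset.mem_range_succ_iff.1 hk
      omega
    · intro hk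
      rw [Finsupp.single_apply, if_neg, zero_mul]
      intro h
      have := spn_eq h
      rw [Finset.mem_range_succ_iff] at hk
      omega

theorem mulW_assoc (x y z : WS) : mulW (mulW x y) z = mulW x (mulW y z) := by
  ext ρ
  have hleft : ∀ m ∈ Finset.range (spn ρ.1 + 1), mulW x y (ρ.take m) * z (ρ.drop m) =
      ∑ k ∈ Finset.range (m + 1),
        x (ρ.take k) * (y ((ρ.drop k).take (m - k)) * z (ρ.drop (k + (m - k)))) := by
    intro m hm
    have hmn : min m (spn ρ.1) = m := min_eq_left (by rw [Finset.mem_range] at hm; omega)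
    rw [mulW_apply, SP.spn_take, hmn, Finset.sum_mul]
    refine Finset.sum_congr rfl fun k hk => ?_
    obtain ⟨l, rfl⟩ := Nat.exists_eq_add_of_le (Finset.mem_range_succ_iff.1 hk)
    rw [Nat.add_sub_cancel_left, SP.take_take, SP.drop_take_add, min_eq_left (by omega), mul_assoc]
  have hright : ∀ k ∈ Finset.range (spn ρ.1 + 1), x (ρ.take k) * mulW y z (ρ.drop k) =
      ∑ l ∈ Finset.range (spn ρ.1 + 1 - k),
        x (ρ.take k) * (y ((ρ.drop k).take l) * z (ρ.drop (k + l))) := by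
    intro k hk
    rw [mulW_apply, SP.spn_drop, Finset.mul_sum,
      Nat.sub_add_comm (Finset.mem_range_succ_iff.1 hk)]
    simp only [SP.drop_drop]
  rw [mulW_apply, mulW_apply, Finset.sum_congr rfl hleft, Finset.sum_congr rfl hright]
  exact Finset.sum_range_diag_flip _
    fun k l => x (ρ.take k) * (y ((ρ.drop k).take l) * z (ρ.drop (k + l)))

theorem unitW_mulW (x : WS) : mulW unitW x = x := by
  ext ρ
  change mulW (Finsupp.single 0 1) x ρ = x ρ
  rw [mulW_single_apply, SP.spn_zero, if_pos ρ.take_zero, one_mul, SP.drop_zero]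

theorem wordProdW_cons (g : GSP) (w : List GSP) :
    wordProdW (g :: w) = mulW (Finsupp.single g.1 1) (wordProdW w) := rfl

theorem wordProdW_append (u v : List GSP) :
    wordProdW (u ++ v) = mulW (wordProdW u) (wordProdW v) := by
  induction u with
  | nil => exact (unitW_mulW _).symm
  | cons g u ih => rw [List.cons_append, wordProdW_cons, wordProdW_cons, ih, mulW_assoc]

/-- The set partition `π₁ ⊎ ⋯ ⊎ πᵣ` attached to a word `π₁ ⋯ πᵣ`. -/
def wordSum (w : List GSP) : SP := (w.map Subtype.val).sum

theorem wordSum_cons (g : GSP) (w : List GSP) : wordSum (g :: w) = g.1 + wordSum w :=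
  List.sum_cons

theorem wordSum_bijective : Function.Bijective wordSum :=
  ⟨SP.isEquidivisible.sum_map_injective SP.size (fun _ => SP.eq_zero_of_spn_eq_zero)
    Subtype.val_injective fun g => SP.indivSP_iff_addIrreducible.1 g.2,
  sum_map_surjective_of_length SP.size (fun _ => SP.eq_zero_of_spn_eq_zero)
    fun a ha => ⟨⟨a, SP.indivSP_iff_addIrreducible.2 ha⟩, rfl⟩⟩

theorem wordProdW_apply_wordSum (w : List GSP) : wordProdW w (wordSum w) = 1 := by
  induction w with
  | nil => exact Finsupp.single_eq_same
  | cons g w ih =>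
    have htake := SP.take_spn_add_add g.1 (wordSum w) 0
    rw [SP.take_zero, add_zero, add_zero] at htake
    rw [wordProdW_cons, wordSum_cons, mulW_single_apply, if_pos htake, one_mul, SP.drop_spn_add, ih]

theorem eq_wordSum_or_card_lt_of_wordProdW_apply_ne_zero (w : List GSP) (ρ : SP)
    (h : wordProdW w ρ ≠ 0) : ρ = wordSum w ∨ ρ.1.card < (wordSum w).1.card := by
  induction w generalizing ρ with
  | nil =>
    exact Or.inl (not_not.1 fun hne => h (Finsupp.single_eq_of_ne hne))
  | cons g w ih =>
    rw [wordProdW_cons, mulW_single_apply, one_mul] at h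
    obtain ⟨htake, hdrop⟩ := ite_ne_right_iff.1 h
    have hcut := SP.eq_take_add_drop_or_card_lt (SP.spn_le_of_take_eq htake)
    rw [htake] at hcut
    rw [wordSum_cons, SP.card_add]
    rcases ih _ hdrop with heq | hlt
    · rwa [heq] at hcut
    · have hcard : ρ.1.card ≤ g.1.1.card + (ρ.drop (spn g.1.1)).1.card := by
        rcases hcut with hcut | hcut
        · exact ((congrArg (fun ρ : SP => ρ.1.card) hcut).trans (SP.card_add _ _)).le
        · exact hcut.le
      exact Or.inr (hcard.trans_lt (Nat.add_lt_add_left hlt _))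

theorem PsiW_eq_linearCombination : PsiW = Finsupp.linearCombination ℂ wordProdW := rfl

theorem PsiW_single (w : List GSP) : PsiW (Finsupp.single w 1) = wordProdW w := by
  rw [PsiW_eq_linearCombination, Finsupp.linearCombination_single, one_smul]

end Product

/-- `WSym` is free as an associative ℂ-algebra on the indivisible set
partitions: the unique unital algebra morphism `PsiW` (which is multiplicative and
unital) from the free associative algebra on the indivisible set partitions to
`WSym` sending each generator `π` to `M_π` is an isomorphism of algebras. -/
theorem wsym_free_on_indivisible :
    Function.Bijective PsiW ∧
    (∀ u v : List GSP,
      PsiW (Finsupp.single (u ++ v) 1) =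
        mulW (PsiW (Finsupp.single u 1)) (PsiW (Finsupp.single v 1))) ∧
    PsiW (Finsupp.single [] 1) = unitW := by
  refine ⟨⟨?_, ?_⟩, fun u v => ?_, PsiW_single []⟩
  · rw [PsiW_eq_linearCombination]
    exact linearCombination_injective_of_unitriangular wordSum_bijective.injective
      wordProdW_apply_wordSum eq_wordSum_or_card_lt_of_wordProdW_apply_ne_zero
  · rw [PsiW_eq_linearCombination]
    exact linearCombination_surjective_of_unitriangular wordSum_bijective.surjective
      wordProdW_apply_wordSum eq_wordSum_or_card_lt_of_wordProdW_apply_ne_zero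
  · simp only [PsiW_single, wordProdW_append]
end
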